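/- arXiv:2006.01909 — 2 statements merged into one kernel-verified Lean document; each statement's English description precedes it below -/
import Mathlib

section
/- Let ζ : [0,∞) → ℝ be a solution of Cauchy's functional equation. The facet vector fv_ζ is a valuation on polytopes: fv_ζ(P∪Q) + fv_ζ(P∩Q) = fv_ζ(P) + fv_ζ(Q) for all convex polytopes P, Q in ℝⁿ with P ∪ Q convex. -/
open scoped RealInnerProductSpace

noncomputable section

/-- Euclidean n-space. -/
abbrev E (n : ℕ) := EuclideanSpace ℝ (Fin n)

/-- A (convex) polytope: convex hull of a nonempty finite set. -/
def IsPolytope {n : ℕ} (P : Set (E n)) : Prop :=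
  ∃ S : Finset (E n), S.Nonempty ∧ P = convexHull ℝ (S : Set (E n))

/-- Support function. -/
def suppFn {n : ℕ} (P : Set (E n)) (u : E n) : ℝ :=
  sSup ((fun x => ⟪x, u⟫) '' P)

/-- The face of `P` in direction `u`. -/
def face {n : ℕ} (P : Set (E n)) (u : E n) : Set (E n) :=
  {x ∈ P | ⟪x, u⟫ = suppFn P u}

/-- Dimension of a set: rank of the direction of its affine span. -/
def polyDim {n : ℕ} (P : Set (E n)) : ℕ :=
  Module.finrank ℝ (affineSpan ℝ P).direction

/-- The set of outer unit facet normals of `P`. -/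
def normals {n : ℕ} (P : Set (E n)) : Set (E n) :=
  {u | ‖u‖ = 1 ∧ polyDim (face P u) = n - 1}

/-- `a_P(u)`: the (n-1)-dimensional Hausdorff measure of the facet `F(P,u)`. -/
def facetArea {n : ℕ} (P : Set (E n)) (u : E n) : ℝ :=
  (MeasureTheory.Measure.hausdorffMeasure ((n : ℝ) - 1) (face P u)).toReal

/-- `V(P,u)`: volume of the cone `conv{0, F(P,u)}`. -/
def coneVol {n : ℕ} (P : Set (E n)) (u : E n) : ℝ :=
  (MeasureTheory.volume (convexHull ℝ ({0} ∪ face P u))).toReal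

/-- Facet normals whose facet does not contain the origin in its affine hull. -/
def goodNormals {n : ℕ} (P : Set (E n)) : Set (E n) :=
  {u ∈ normals P | (0 : E n) ∉ affineSpan ℝ (face P u)}

/-- The facet vector `fv_ζ`. -/
def fv {n : ℕ} (ζ : ℝ → ℝ) (P : Set (E n)) : E n :=
  ∑ᶠ u ∈ goodNormals P, (ζ (coneVol P u) / suppFn P u) • u

/-- The linear action of a matrix on Euclidean space. -/
def act {n : ℕ} (M : Matrix (Fin n) (Fin n) ℝ) : E n →ₗ[ℝ] E n :=
  Matrix.toEuclideanLin M

/-- Inverse transpose of a matrix. -/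
def invT {n : ℕ} (M : Matrix (Fin n) (Fin n) ℝ) : Matrix (Fin n) (Fin n) ℝ :=
  (M⁻¹).transpose

/-- The `k`-dimensional standard simplex `T^k = conv{0, e₁, …, e_k}` in `ℝⁿ`. -/
def Tk (n k : ℕ) : Set (E n) :=
  convexHull ℝ ({0} ∪ (fun i : Fin n => EuclideanSpace.single i (1 : ℝ)) '' {i | (i : ℕ) < k})

/-!
In each direction `u` the facet vector only sees the pair `(h_P(u), F(P,u))`. If the support values
of `P` and `Q` at `u` differ, then, `P ∪ Q` being convex, `P ∪ Q` inherits the pair with the larger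
value and `P ∩ Q` the one with the smaller. If they agree, all four support values agree, and the
faces of `P ∪ Q` and `P ∩ Q` are the union and the intersection of the faces of `P` and `Q`. When
the common value is nonzero, these faces lie in a hyperplane missing the origin, so forming cones
commutes with both operations and the cone volumes satisfy the valuation identity, which `ζ`
preserves. Cones over faces that are not facets are null sets, so the sum may be taken over the
whole unit sphere, where the identity is applied direction by direction.
-/

section Convex

variable {V : Type*} [AddCommGroup V] [Module ℝ V] {A B : Set V}

lemma exists_mem_segment_mem_inter [TopologicalSpace V] [ContinuousAdd V]
    [ContinuousSMul ℝ V] (hA : IsClosed A) (hB : IsClosed B) (hAB : Convex ℝ (A ∪ B)) {a b : V}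
    (ha : a ∈ A) (hb : b ∈ B) : ∃ x ∈ segment ℝ a b, x ∈ A ∩ B :=
  isPreconnected_closed_iff.1 (convex_segment a b).isPreconnected A B hA hB
    (hAB.segment_subset (.inl ha) (.inr hb)) ⟨a, left_mem_segment ℝ a b, ha⟩
    ⟨b, right_mem_segment ℝ a b, hb⟩

open scoped Pointwise

lemma convexHull_insert_zero (hA : Convex ℝ A) (hne : A.Nonempty) :
    convexHull ℝ (insert 0 A) = Set.Icc (0 : ℝ) 1 • A := by
  ext x
  simp only [convexHull_insert hne, hA.convexHull_eq, convexJoin_singleton_left, Set.mem_iUnion,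
    segment_eq_image, smul_zero, zero_add, Set.mem_image, Set.mem_smul, exists_prop]
  tauto

lemma smul_inter_of_eqOn_const {c : ℝ} (hc : c ≠ 0) (f : V →ₗ[ℝ] ℝ) (hA : ∀ x ∈ A, f x = c)
    (hB : ∀ x ∈ B, f x = c) (hI : (A ∩ B).Nonempty) (T : Set ℝ) :
    T • (A ∩ B) = T • A ∩ T • B := by
  refine Set.smul_inter_subset.antisymm ?_
  rintro _ ⟨⟨t, ht, a, ha, rfl⟩, s, -, b, hb, hab⟩
  obtain rfl : s = t := by
    have := congrArg f hab
    simpa [hA a ha, hB b hb, hc] using this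
  rcases eq_or_ne s 0 with rfl | hs
  · obtain ⟨z, hz⟩ := hI
    exact ⟨0, ht, z, hz, by simp⟩
  · obtain rfl : b = a := smul_right_injective V hs hab
    exact ⟨s, ht, b, ⟨ha, hb⟩, rfl⟩

lemma measureReal_cone_union_add_inter [TopologicalSpace V] [ContinuousSMul ℝ V] [T2Space V]
    [MeasurableSpace V] [OpensMeasurableSpace V] (μ : MeasureTheory.Measure V)
    [MeasureTheory.IsFiniteMeasureOnCompacts μ] {c : ℝ} (hc : c ≠ 0) (f : V →ₗ[ℝ] ℝ)
    (hA : ∀ x ∈ A, f x = c) (hB : ∀ x ∈ B, f x = c) (hI : (A ∩ B).Nonempty)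
    (cA : Convex ℝ A) (cB : Convex ℝ B) (cU : Convex ℝ (A ∪ B))
    (kA : IsCompact A) (kB : IsCompact B) :
    μ.real (convexHull ℝ (insert 0 (A ∪ B))) + μ.real (convexHull ℝ (insert 0 (A ∩ B))) =
      μ.real (convexHull ℝ (insert 0 A)) + μ.real (convexHull ℝ (insert 0 B)) := by
  rw [convexHull_insert_zero cU (hI.mono (Set.inter_subset_left.trans Set.subset_union_left)),
    convexHull_insert_zero (cA.inter cB) hI, convexHull_insert_zero cA hI.left,
    convexHull_insert_zero cB hI.right, Set.smul_union, smul_inter_of_eqOn_const hc f hA hB hI]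
  have kA' := isCompact_Icc (a := (0 : ℝ)) (b := 1) |>.smul_set kA
  have kB' := isCompact_Icc (a := (0 : ℝ)) (b := 1) |>.smul_set kB
  exact MeasureTheory.measureReal_union_add_inter kB'.measurableSet kA'.measure_ne_top
    kB'.measure_ne_top

end Convex

lemma addHaar_convexHull_insert_eq_zero {V : Type*} [NormedAddCommGroup V] [NormedSpace ℝ V]
    [FiniteDimensional ℝ V] [MeasurableSpace V] [BorelSpace V] (μ : MeasureTheory.Measure V)
    [μ.IsAddHaarMeasure] {A : Set V}
    (hA : Module.finrank ℝ (vectorSpan ℝ A) + 1 < Module.finrank ℝ V) (x : V) :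
    μ (convexHull ℝ (insert x A)) = 0 := by
  refine MeasureTheory.measure_mono_null (convexHull_subset_affineSpan _)
    (MeasureTheory.Measure.addHaar_affineSubspace μ _ fun h ↦ ?_)
  have hle := finrank_vectorSpan_insert_le_set ℝ A x
  rw [← direction_affineSpan, h, AffineSubspace.direction_top, finrank_top] at hle
  omega

section Hyperplane

variable {V : Type*} [NormedAddCommGroup V] [InnerProductSpace ℝ V]

lemma finite_setOf_norm_eq_one_orthogonal_eq (W : Submodule ℝ V) :
    {u : V | ‖u‖ = 1 ∧ (ℝ ∙ u)ᗮ = W}.Finite := by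
  rcases Set.eq_empty_or_nonempty {u : V | ‖u‖ = 1 ∧ (ℝ ∙ u)ᗮ = W} with h | ⟨v, hv, rfl⟩
  · simp [h]
  refine (Set.toFinite {v, -v}).subset fun u ⟨hu, huv⟩ ↦ ?_
  have hspan : (ℝ ∙ u) = ℝ ∙ v := by
    rw [← Submodule.orthogonal_orthogonal (ℝ ∙ u), huv, Submodule.orthogonal_orthogonal]
  obtain ⟨c, rfl⟩ := Submodule.mem_span_singleton.1 (hspan ▸ Submodule.mem_span_singleton_self u)
  have hc : |c| = 1 := by simpa [norm_smul, hv] using hu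
  rcases eq_or_eq_neg_of_abs_eq hc with rfl | rfl <;> simp

lemma finrank_orthogonal_span_singleton_add_one [FiniteDimensional ℝ V] {u : V} (hu : u ≠ 0) :
    Module.finrank ℝ (ℝ ∙ u)ᗮ + 1 = Module.finrank ℝ V := by
  rw [← Submodule.finrank_add_finrank_orthogonal (ℝ ∙ u), finrank_span_singleton hu, add_comm]

end Hyperplane

section FacetVector

variable {n : ℕ} {P Q : Set (E n)} {u : E n} {ζ : ℝ → ℝ}

lemma inner_le_suppFn (hP : IsCompact P) {x : E n} (hx : x ∈ P) : ⟪x, u⟫ ≤ suppFn P u :=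
  le_csSup (hP.bddAbove_image (by fun_prop)) ⟨x, hx, rfl⟩

lemma face_nonempty (hP : IsCompact P) (hne : P.Nonempty) (u : E n) : (face P u).Nonempty := by
  obtain ⟨x, hx, hxu⟩ := hP.exists_sSup_image_eq hne (f := fun x ↦ ⟪x, u⟫) (by fun_prop)
  exact ⟨x, hx, hxu.symm⟩

lemma isExposed_face (hP : IsCompact P) (u : E n) : IsExposed ℝ P (face P u) := by
  rintro ⟨x₀, hx₀, hx₀u⟩
  refine ⟨innerSL ℝ u, Set.ext fun x ↦ and_congr_right fun hx ↦ ?_⟩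
  simp only [innerSL_apply_apply, real_inner_comm _ u]
  refine ⟨fun h y hy ↦ (inner_le_suppFn hP hy).trans_eq h.symm, fun h ↦ ?_⟩
  exact (inner_le_suppFn hP hx).antisymm (hx₀u.ge.trans (h x₀ hx₀))

lemma inner_eq_suppFn_of_mem_affineSpan {x : E n} (hx : x ∈ affineSpan ℝ (face P u)) :
    ⟪x, u⟫ = suppFn P u := by
  refine affineSpan_induction (p := fun x ↦ ⟪x, u⟫ = suppFn P u) hx (fun x hx ↦ hx.2) ?_
  intro c x y z hx hy hz
  simp [inner_add_left, inner_smul_left, inner_sub_left, hx, hy, hz]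

lemma vectorSpan_face_le : vectorSpan ℝ (face P u) ≤ (ℝ ∙ u)ᗮ := by
  rw [vectorSpan_def, Submodule.span_le]
  rintro _ ⟨x, hx, y, hy, rfl⟩
  simp [Submodule.mem_orthogonal_singleton_iff_inner_left, inner_sub_left, hx.2, hy.2]

lemma polyDim_face_add_one_le (hu : ‖u‖ = 1) : polyDim (face P u) + 1 ≤ n := by
  have hu0 : u ≠ 0 := norm_ne_zero_iff.1 (by simp [hu])
  have hle := Submodule.finrank_mono (vectorSpan_face_le (P := P) (u := u))
  have hrank := finrank_orthogonal_span_singleton_add_one hu0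
  rw [finrank_euclideanSpace_fin] at hrank
  rw [polyDim, direction_affineSpan]
  omega

lemma vectorSpan_face_eq_orthogonal (hu : u ∈ normals P) : vectorSpan ℝ (face P u) = (ℝ ∙ u)ᗮ := by
  have hu0 : u ≠ 0 := norm_ne_zero_iff.1 (by simp [hu.1])
  have hdim := hu.2
  have hrank := finrank_orthogonal_span_singleton_add_one hu0
  rw [polyDim, direction_affineSpan] at hdim
  rw [finrank_euclideanSpace_fin] at hrank
  exact Submodule.eq_of_le_of_finrank_eq vectorSpan_face_le (by omega)

lemma coneVol_eq_zero_of_notMem_normals (hu : ‖u‖ = 1) (hu' : u ∉ normals P) : coneVol P u = 0 := by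
  have hle := polyDim_face_add_one_le (P := P) hu
  have hne : polyDim (face P u) ≠ n - 1 := fun h ↦ hu' ⟨hu, h⟩
  rw [polyDim, direction_affineSpan] at hle hne
  rw [coneVol, Set.singleton_union, addHaar_convexHull_insert_eq_zero, ENNReal.toReal_zero]
  rw [finrank_euclideanSpace_fin]
  omega

lemma coneVol_nonneg (P : Set (E n)) (u : E n) : 0 ≤ coneVol P u := ENNReal.toReal_nonneg

lemma mem_goodNormals (hu : ‖u‖ = 1) (h : coneVol P u * |suppFn P u| ≠ 0) :
    u ∈ goodNormals P := by
  obtain ⟨hv, hs⟩ : coneVol P u ≠ 0 ∧ suppFn P u ≠ 0 := by simpa using h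
  refine ⟨not_imp_comm.1 (coneVol_eq_zero_of_notMem_normals hu) hv, fun h ↦ hs ?_⟩
  rw [← inner_eq_suppFn_of_mem_affineSpan h, inner_zero_left]

namespace IsPolytope

lemma isCompact (hP : IsPolytope P) : IsCompact P := by
  obtain ⟨S, -, rfl⟩ := hP
  exact S.finite_toSet.isCompact_convexHull ℝ

lemma convex (hP : IsPolytope P) : Convex ℝ P := by
  obtain ⟨S, -, rfl⟩ := hP
  exact convex_convexHull ℝ _

lemma nonempty (hP : IsPolytope P) : P.Nonempty := by
  obtain ⟨S, hS, rfl⟩ := hP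
  exact (Finset.coe_nonempty.2 hS).convexHull

end IsPolytope

lemma convexHull_inter_face {S : Set (E n)} (hS : S.Finite) (u : E n) :
    convexHull ℝ (S ∩ face (convexHull ℝ S) u) = face (convexHull ℝ S) u := by
  have hcompact := hS.isCompact_convexHull ℝ
  have hface := isExposed_face hcompact u
  have hconvex := hface.convex (convex_convexHull ℝ S)
  refine (convexHull_min Set.inter_subset_right hconvex).antisymm ?_
  rw [← closure_convexHull_extremePoints (hface.isCompact hcompact) hconvex]
  refine closure_minimal (convexHull_mono fun x hx ↦ ⟨?_, ?_⟩)
    ((hS.inter_of_left _).isCompact_convexHull ℝ).isClosed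
  · exact extremePoints_convexHull_subset (hface.isExtreme.extremePoints_subset_extremePoints hx)
  · rw [closure_convexHull_extremePoints (hface.isCompact hcompact) hconvex]
    exact hx.1

lemma vectorSpan_inter_face {S : Set (E n)} (hS : S.Finite) (u : E n) :
    vectorSpan ℝ (S ∩ face (convexHull ℝ S) u) = vectorSpan ℝ (face (convexHull ℝ S) u) := by
  rw [← direction_affineSpan, ← affineSpan_convexHull, convexHull_inter_face hS,
    direction_affineSpan]

lemma IsPolytope.finite_normals (hP : IsPolytope P) : (normals P).Finite := by
  obtain ⟨S, -, rfl⟩ := hP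
  -- The vertices on a facet determine the line spanned by its normal.
  refine (S.finite_toSet.finite_subsets.biUnion fun T _ ↦
    finite_setOf_norm_eq_one_orthogonal_eq (vectorSpan ℝ T)).subset fun u hu ↦ ?_
  refine Set.mem_biUnion (x := (S : Set (E n)) ∩ face (convexHull ℝ S) u) Set.inter_subset_left
    ⟨hu.1, ?_⟩
  rw [vectorSpan_inter_face S.finite_toSet, vectorSpan_face_eq_orthogonal hu]

lemma IsPolytope.finite_goodNormals (hP : IsPolytope P) : (goodNormals P).Finite :=
  hP.finite_normals.subset fun _ hu ↦ hu.1

lemma suppFn_union (hP : IsCompact P) (hQ : IsCompact Q) (nP : P.Nonempty) (nQ : Q.Nonempty)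
    (u : E n) : suppFn (P ∪ Q) u = max (suppFn P u) (suppFn Q u) := by
  rw [suppFn, Set.image_union]
  exact csSup_union (hP.bddAbove_image (by fun_prop)) (nP.image _)
    (hQ.bddAbove_image (by fun_prop)) (nQ.image _)

lemma inter_face_nonempty (hP : IsCompact P) (hQ : IsCompact Q) (nP : P.Nonempty)
    (nQ : Q.Nonempty) (hPQ : Convex ℝ (P ∪ Q)) (h : suppFn Q u ≤ suppFn P u) :
    (P ∩ face Q u).Nonempty := by
  obtain ⟨p, hp, hpu⟩ := face_nonempty hP nP u
  obtain ⟨q, hq, hqu⟩ := face_nonempty hQ nQ u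
  obtain ⟨x, hx, hxP, hxQ⟩ := exists_mem_segment_mem_inter hP.isClosed hQ.isClosed hPQ hp hq
  refine ⟨x, hxP, hxQ, (inner_le_suppFn hQ hxQ).antisymm ?_⟩
  have hhalf : Convex ℝ {y : E n | suppFn Q u ≤ ⟪y, u⟫} :=
    convex_halfSpace_ge ((innerₗ (E n)).flip u).isLinear _
  exact hhalf.segment_subset (h.trans_eq hpu.symm) hqu.ge hx

lemma face_subset_of_lt (hP : IsCompact P) (hQ : IsCompact Q) (nP : P.Nonempty)
    (hPQ : Convex ℝ (P ∪ Q)) (h : suppFn Q u < suppFn P u) : face Q u ⊆ P := by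
  rintro q ⟨hq, hqu⟩
  obtain ⟨p, hp, hpu⟩ := face_nonempty hP nP u
  obtain ⟨x, ⟨a, b, ha, -, hab, rfl⟩, hxP, hxQ⟩ :=
    exists_mem_segment_mem_inter hP.isClosed hQ.isClosed hPQ hp hq
  have hx := inner_le_suppFn (u := u) hQ hxQ
  obtain rfl : b = 1 - a := by linarith
  rw [inner_add_left, real_inner_smul_left, real_inner_smul_left, hpu, hqu] at hx
  obtain rfl : a = 0 := by nlinarith
  simpa using hxP

lemma suppFn_inter (hP : IsCompact P) (hQ : IsCompact Q) (nP : P.Nonempty) (nQ : Q.Nonempty)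
    (hPQ : Convex ℝ (P ∪ Q)) (u : E n) : suppFn (P ∩ Q) u = min (suppFn P u) (suppFn Q u) := by
  wlog h : suppFn Q u ≤ suppFn P u generalizing P Q
  · rw [Set.inter_comm, min_comm]
    exact this hQ hP nQ nP (Set.union_comm P Q ▸ hPQ) (le_of_not_ge h)
  obtain ⟨x, hxP, hxQ, hxu⟩ := inter_face_nonempty hP hQ nP nQ hPQ h
  rw [min_eq_right h]
  refine IsGreatest.csSup_eq ⟨⟨x, ⟨hxP, hxQ⟩, hxu⟩, ?_⟩
  rintro _ ⟨y, hy, rfl⟩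
  exact inner_le_suppFn hQ hy.2

lemma face_union_of_lt (hP : IsCompact P) (hQ : IsCompact Q) (nP : P.Nonempty)
    (nQ : Q.Nonempty) (h : suppFn Q u < suppFn P u) : face (P ∪ Q) u = face P u := by
  have hs := suppFn_union hP hQ nP nQ u
  rw [max_eq_left h.le] at hs
  ext x
  simp only [face, hs, Set.mem_union, Set.mem_ofPred_eq, or_and_right, or_iff_left_iff_imp]
  rintro ⟨hx, hxu⟩
  exact absurd (inner_le_suppFn hQ hx) (hxu ▸ h).not_ge

lemma face_union_of_eq (hP : IsCompact P) (hQ : IsCompact Q) (nP : P.Nonempty)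
    (nQ : Q.Nonempty) (h : suppFn Q u = suppFn P u) :
    face (P ∪ Q) u = face P u ∪ face Q u := by
  have hs := suppFn_union hP hQ nP nQ u
  rw [h, max_self] at hs
  ext x
  simp only [face, hs, h, Set.mem_union, Set.mem_ofPred_eq, or_and_right]

lemma face_inter_of_lt (hP : IsCompact P) (hQ : IsCompact Q) (nP : P.Nonempty)
    (nQ : Q.Nonempty) (hPQ : Convex ℝ (P ∪ Q)) (h : suppFn Q u < suppFn P u) :
    face (P ∩ Q) u = face Q u := by
  have hs := suppFn_inter hP hQ nP nQ hPQ u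
  rw [min_eq_right h.le] at hs
  ext x
  simp only [face, hs, Set.mem_inter_iff, Set.mem_ofPred_eq, and_assoc, and_iff_right_iff_imp]
  exact fun hx ↦ face_subset_of_lt hP hQ nP hPQ h hx

lemma face_inter_of_eq (hP : IsCompact P) (hQ : IsCompact Q) (nP : P.Nonempty)
    (nQ : Q.Nonempty) (hPQ : Convex ℝ (P ∪ Q)) (h : suppFn Q u = suppFn P u) :
    face (P ∩ Q) u = face P u ∩ face Q u := by
  have hs := suppFn_inter hP hQ nP nQ hPQ u
  rw [h, min_self] at hs
  ext x
  simp only [face, hs, h, Set.mem_inter_iff, Set.mem_ofPred_eq]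
  exact and_and_right

lemma coneVol_union_add_inter (hP : IsCompact P) (hQ : IsCompact Q) (cP : Convex ℝ P)
    (cQ : Convex ℝ Q) (nP : P.Nonempty) (nQ : Q.Nonempty) (hPQ : Convex ℝ (P ∪ Q))
    (h : suppFn Q u = suppFn P u) (h0 : suppFn P u ≠ 0) :
    coneVol (P ∪ Q) u + coneVol (P ∩ Q) u = coneVol P u + coneVol Q u := by
  have hU := face_union_of_eq hP hQ nP nQ h
  obtain ⟨x, hxP, hxQ⟩ := inter_face_nonempty hP hQ nP nQ hPQ h.le
  simp only [coneVol, hU, face_inter_of_eq hP hQ nP nQ hPQ h, Set.singleton_union]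
  refine measureReal_cone_union_add_inter MeasureTheory.volume h0 ((innerₗ (E n)).flip u)
    (fun y hy ↦ hy.2) (fun y hy ↦ hy.2.trans h) ⟨x, ⟨hxP, hxQ.2.trans h⟩, hxQ⟩
    ((isExposed_face hP u).convex cP) ((isExposed_face hQ u).convex cQ) ?_
    ((isExposed_face hP u).isCompact hP) ((isExposed_face hQ u).isCompact hQ)
  exact hU ▸ (isExposed_face (hP.union hQ) u).convex hPQ

lemma weighted_coneVol_union_add_inter
    (hζ : ∀ a b : ℝ, 0 ≤ a → 0 ≤ b → ζ (a + b) = ζ a + ζ b) {g : ℝ → ℝ} (hg : g 0 = 0)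
    (hP : IsCompact P) (hQ : IsCompact Q) (cP : Convex ℝ P) (cQ : Convex ℝ Q)
    (nP : P.Nonempty) (nQ : Q.Nonempty) (hPQ : Convex ℝ (P ∪ Q)) (u : E n) :
    ζ (coneVol (P ∪ Q) u) * g (suppFn (P ∪ Q) u) + ζ (coneVol (P ∩ Q) u) * g (suppFn (P ∩ Q) u) =
      ζ (coneVol P u) * g (suppFn P u) + ζ (coneVol Q u) * g (suppFn Q u) := by
  wlog hle : suppFn Q u ≤ suppFn P u generalizing P Q
  · rw [Set.union_comm, Set.inter_comm, this hQ hP cQ cP nQ nP (Set.union_comm P Q ▸ hPQ)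
      (le_of_not_ge hle), add_comm]
  rw [suppFn_union hP hQ nP nQ, suppFn_inter hP hQ nP nQ hPQ, max_eq_left hle, min_eq_right hle]
  rcases hle.lt_or_eq with h | h
  · simp only [coneVol, face_union_of_lt hP hQ nP nQ h, face_inter_of_lt hP hQ nP nQ hPQ h]
  rw [h, ← add_mul, ← add_mul]
  rcases eq_or_ne (suppFn P u) 0 with h0 | h0
  · rw [h0, hg, mul_zero, mul_zero]
  rw [← hζ _ _ (coneVol_nonneg _ _) (coneVol_nonneg _ _),
    ← hζ _ _ (coneVol_nonneg _ _) (coneVol_nonneg _ _),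
    coneVol_union_add_inter hP hQ cP cQ nP nQ hPQ h h0]

/-- The contribution of the direction `u` to the facet vector of `P`. It is defined for every `u`;
when `ζ 0 = 0` it vanishes at the unit vectors outside `goodNormals P`, because the cone over the
face is a null set or because of the convention `x / 0 = 0`. -/
def facetTerm (ζ : ℝ → ℝ) (P : Set (E n)) (u : E n) : E n :=
  (ζ (coneVol P u) / suppFn P u) • u

lemma coneVol_mul_abs_suppFn_ne_zero (hζ : ζ 0 = 0) (h : facetTerm ζ P u ≠ 0) :
    coneVol P u * |suppFn P u| ≠ 0 := by
  refine mul_ne_zero (fun h0 ↦ h ?_) (abs_ne_zero.2 fun h0 ↦ h ?_) <;> simp [facetTerm, h0, hζ]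

lemma fv_eq_finsum_sphere (hζ : ζ 0 = 0) (P : Set (E n)) :
    fv ζ P = ∑ᶠ u ∈ Metric.sphere 0 1, facetTerm ζ P u := by
  refine finsum_mem_inter_support_eq _ _ _ (Set.ext fun u ↦ and_congr_left fun h ↦ ?_)
  rw [mem_sphere_zero_iff_norm]
  exact ⟨fun hu ↦ hu.1.1, fun hu ↦ mem_goodNormals hu (coneVol_mul_abs_suppFn_ne_zero hζ h)⟩

lemma sphere_inter_support_facetTerm_subset (hζ : ζ 0 = 0) (P : Set (E n)) :
    Metric.sphere 0 1 ∩ Function.support (facetTerm ζ P) ⊆ goodNormals P := fun _ ⟨hu, h⟩ ↦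
  mem_goodNormals (mem_sphere_zero_iff_norm.1 hu) (coneVol_mul_abs_suppFn_ne_zero hζ h)

lemma sphere_inter_support_facetTerm_union_subset (hζ : ζ 0 = 0) (hP : IsCompact P)
    (hQ : IsCompact Q) (cP : Convex ℝ P) (cQ : Convex ℝ Q) (nP : P.Nonempty) (nQ : Q.Nonempty)
    (hPQ : Convex ℝ (P ∪ Q)) :
    Metric.sphere 0 1 ∩
        (Function.support (facetTerm ζ (P ∪ Q)) ∪ Function.support (facetTerm ζ (P ∩ Q))) ⊆
      goodNormals P ∪ goodNormals Q := by
  rintro u ⟨hu, h⟩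
  rw [mem_sphere_zero_iff_norm] at hu
  -- With `ζ = id` and the weight `|·|` all four terms are nonnegative: no cancellation occurs.
  have key := weighted_coneVol_union_add_inter (ζ := id) (fun _ _ _ _ ↦ rfl) abs_zero
    hP hQ cP cQ nP nQ hPQ u
  have nonneg (R : Set (E n)) : 0 ≤ coneVol R u * |suppFn R u| :=
    mul_nonneg (coneVol_nonneg R u) (abs_nonneg _)
  by_contra hnot
  obtain ⟨hP0, hQ0⟩ := not_or.1 hnot
  rw [id, id, id, id, not_imp_comm.1 (mem_goodNormals hu) hP0,
    not_imp_comm.1 (mem_goodNormals hu) hQ0, add_zero,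
    add_eq_zero_iff_of_nonneg (nonneg _) (nonneg _)] at key
  rcases h with h | h
  · exact coneVol_mul_abs_suppFn_ne_zero hζ h key.1
  · exact coneVol_mul_abs_suppFn_ne_zero hζ h key.2

theorem fv_valuation_general (hζ : ∀ a b : ℝ, 0 ≤ a → 0 ≤ b → ζ (a + b) = ζ a + ζ b)
    (hP : IsCompact P) (hQ : IsCompact Q) (cP : Convex ℝ P) (cQ : Convex ℝ Q)
    (nP : P.Nonempty) (nQ : Q.Nonempty) (fP : (goodNormals P).Finite)
    (fQ : (goodNormals Q).Finite) (hPQ : Convex ℝ (P ∪ Q)) :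
    fv ζ (P ∪ Q) + fv ζ (P ∩ Q) = fv ζ P + fv ζ Q := by
  have hζ0 : ζ 0 = 0 := by simpa using hζ 0 0 le_rfl le_rfl
  have hsub := sphere_inter_support_facetTerm_union_subset hζ0 hP hQ cP cQ nP nQ hPQ
  rw [Set.inter_union_distrib_left, Set.union_subset_iff] at hsub
  simp only [fv_eq_finsum_sphere hζ0]
  rw [← finsum_mem_add_distrib' ((fP.union fQ).subset hsub.1) ((fP.union fQ).subset hsub.2),
    ← finsum_mem_add_distrib' (fP.subset (sphere_inter_support_facetTerm_subset hζ0 P))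
      (fQ.subset (sphere_inter_support_facetTerm_subset hζ0 Q))]
  refine finsum_mem_congr rfl fun u _ ↦ ?_
  simp only [facetTerm, ← add_smul, div_eq_mul_inv,
    weighted_coneVol_union_add_inter hζ inv_zero hP hQ cP cQ nP nQ hPQ u]

end FacetVector

/-- the facet vector is a valuation on polytopes. -/
theorem fv_valuation {n : ℕ} (ζ : ℝ → ℝ)
    (hζ : ∀ a b : ℝ, 0 ≤ a → 0 ≤ b → ζ (a + b) = ζ a + ζ b)
    (P Q : Set (E n)) (hP : IsPolytope P) (hQ : IsPolytope Q)
    (hPQ : Convex ℝ (P ∪ Q)) :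
    fv ζ (P ∪ Q) + fv ζ (P ∩ Q) = fv ζ P + fv ζ Q := by
  exact fv_valuation_general hζ hP.isCompact hQ.isCompact hP.convex hQ.convex hP.nonempty
    hQ.nonempty hP.finite_goodNormals hQ.finite_goodNormals hPQ
end
end

section
/- Let n ≥ 2 and let Z be an SL(n) contravariant valuation from polytopes in ℝⁿ containing the origin to ℝⁿ. If Z(T^k) = 0 for k = 0, 1, …, n−1, then Z(P) = 0 for every polytope P containing the origin with dim P ≤ n−1. -/
open scoped RealInnerProductSpace

noncomputable section

/-!
If a point `u` of the segment `[x, y]` is added to a point set `S ∋ 0`, the polytope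
`conv (S ∪ {x, y})` splits into `conv (S ∪ {u, x})` and `conv (S ∪ {u, y})`, which meet in
`conv (S ∪ {u})`. A linearly dependent set `V` has a Radon partition: `A ⊆ V` such that `conv A`
meets `conv ({0} ∪ V \ A)`. Splitting along a suitable point `u` of a segment between two points
of `A` replaces these two points by `u` and gives one of them back to the other side, so that the
number of points stays the same and the side `A` shrinks, while the common face is spanned by fewer
points. Once `A` is a single point, that point is redundant. Hence a valuation vanishing on
`conv ({0} ∪ T)` for linearly independent `T` vanishes on every polytope containing the origin. The
polytopes `conv ({0} ∪ T)` with fewer than `n` points in `T` are `SL(n)` images of the simplices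
`T^k` without any dilation, since the free columns of the matrix can be used to normalise its
determinant.
-/

open Module

section Polytope

variable {𝕜 F G : Type*} [Semiring 𝕜] [PartialOrder 𝕜] [AddCommMonoid F] [Module 𝕜 F]

variable (𝕜) in
/-- A polytope, as the convex hull of a nonempty finite set of points. -/
def IsConvexPolytope (P : Set F) : Prop :=
  ∃ S : Finset F, S.Nonempty ∧ P = convexHull 𝕜 (S : Set F)

variable (𝕜) in
/-- A valuation on the polytopes containing the origin. It is encoded as a total function whose
values at other sets are irrelevant. -/
def IsPolytopeValuation [Add G] (z : Set F → G) : Prop :=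
  ∀ P Q : Set F, IsConvexPolytope 𝕜 P → IsConvexPolytope 𝕜 Q → IsConvexPolytope 𝕜 (P ∪ Q) →
    IsConvexPolytope 𝕜 (P ∩ Q) → 0 ∈ P → 0 ∈ Q → z P + z Q = z (P ∪ Q) + z (P ∩ Q)

lemma convexHull_insert_eq_of_mem {x : F} {S : Set F} (hx : x ∈ convexHull 𝕜 S) :
    convexHull 𝕜 (insert x S) = convexHull 𝕜 S :=
  (convexHull_min (Set.insert_subset hx (subset_convexHull 𝕜 S))
    (convex_convexHull 𝕜 S)).antisymm (convexHull_mono (Set.subset_insert x S))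

lemma isConvexPolytope_convexHull {S : Set F} (hS : S.Finite) (hne : S.Nonempty) :
    IsConvexPolytope 𝕜 (convexHull 𝕜 S) :=
  ⟨hS.toFinset, hS.toFinset_nonempty.2 hne, by rw [hS.coe_toFinset]⟩

end Polytope

section OrderedField

variable {𝕜 F G : Type*} [Field 𝕜] [LinearOrder 𝕜] [IsStrictOrderedRing 𝕜]
  [AddCommGroup F] [Module 𝕜 F]

lemma smul_add_smul_add_smul_mem_of_convex {C : Set F} (hC : Convex 𝕜 C) {x y z : F} (hx : x ∈ C)
    (hy : y ∈ C) (hz : z ∈ C) {a b c : 𝕜} (ha : 0 ≤ a) (hb : 0 ≤ b) (hc : 0 ≤ c)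
    (habc : a + b + c = 1) : a • x + b • y + c • z ∈ C := by
  have hmem := hC.sum_mem (t := Finset.univ) (w := ![a, b, c]) (z := ![x, y, z])
    (by simp [Fin.forall_fin_succ, ha, hb, hc]) (by simpa [Fin.sum_univ_three])
    (by simp [Fin.forall_fin_succ, hx, hy, hz])
  simpa [Fin.sum_univ_three] using hmem

lemma exists_smul_add_smul_add_smul_eq_of_mem_convexHull_insert_insert {x y w : F} {S : Set F}
    (hS : S.Nonempty) (hw : w ∈ convexHull 𝕜 (insert x (insert y S))) :
    ∃ r ∈ convexHull 𝕜 S, ∃ a b c : 𝕜, 0 ≤ a ∧ 0 ≤ b ∧ 0 ≤ c ∧ a + b + c = 1 ∧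
      a • x + b • y + c • r = w := by
  rw [convexHull_insert (Set.insert_nonempty y S), convexHull_insert hS] at hw
  simp only [convexJoin_singleton_left, Set.mem_iUnion, exists_prop] at hw
  obtain ⟨q, ⟨r, hr, b, c, hb, hc, hbc, rfl⟩, a, d, ha, hd, had, rfl⟩ := hw
  refine ⟨r, hr, a, d * b, d * c, ha, mul_nonneg hd hb, mul_nonneg hd hc, ?_, by module⟩
  linear_combination had + d * hbc

lemma smul_add_smul_add_smul_mem_convexHull_insert {x y r : F} {S : Set F} {α β a b c : 𝕜}
    (hα : 0 ≤ α) (hαβ : α + β = 1) (hu : α • x + β • y ∈ convexHull 𝕜 S)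
    (hr : r ∈ convexHull 𝕜 S) (ha : 0 ≤ a) (hb : 0 ≤ b) (hc : 0 ≤ c) (habc : a + b + c = 1)
    (hab : a * β ≤ b * α) : a • x + b • y + c • r ∈ convexHull 𝕜 (insert y S) := by
  have hS : convexHull 𝕜 S ⊆ convexHull 𝕜 (insert y S) := convexHull_mono (Set.subset_insert y S)
  have hy : y ∈ convexHull 𝕜 (insert y S) := subset_convexHull 𝕜 _ (Set.mem_insert y S)
  obtain ⟨ha_eq, hy_nonneg⟩ : a / α * α = a ∧ 0 ≤ b - a / α * β := by
    rcases hα.eq_or_lt with rfl | hα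
    · obtain rfl : β = 1 := by simpa using hαβ
      exact ⟨by linarith, by simpa using hb⟩
    · refine ⟨div_mul_cancel₀ a hα.ne', ?_⟩
      rwa [sub_nonneg, div_mul_eq_mul_div, div_le_iff₀ hα]
  have hsum : a / α + (b - a / α * β) + c = 1 := by
    linear_combination habc + ha_eq - (a / α) * hαβ
  have hw : a • x + b • y + c • r =
      (a / α) • (α • x + β • y) + (b - a / α * β) • y + c • r := by
    linear_combination (norm := module) -ha_eq • x
  rw [hw]
  exact smul_add_smul_add_smul_mem_of_convex (convex_convexHull 𝕜 _) (hS hu) hy (hS hr)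
    (div_nonneg ha hα) hy_nonneg hc hsum

lemma convexHull_insert_union_convexHull_insert {x y : F} {S : Set F}
    (h : (segment 𝕜 x y ∩ convexHull 𝕜 S).Nonempty) :
    convexHull 𝕜 (insert x S) ∪ convexHull 𝕜 (insert y S) =
      convexHull 𝕜 (insert x (insert y S)) := by
  obtain ⟨_, ⟨α, β, hα, hβ, hαβ, rfl⟩, hu⟩ := h
  apply (Set.union_subset (convexHull_mono (Set.insert_subset_insert (Set.subset_insert y S)))
    (convexHull_mono (Set.subset_insert x _))).antisymm
  intro w hw
  obtain ⟨r, hr, a, b, c, ha, hb, hc, habc, rfl⟩ :=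
    exists_smul_add_smul_add_smul_eq_of_mem_convexHull_insert_insert
      (convexHull_nonempty_iff.1 ⟨_, hu⟩) hw
  rcases le_total (a * β) (b * α) with hab | hab
  · exact Or.inr (smul_add_smul_add_smul_mem_convexHull_insert hα hαβ hu hr ha hb hc habc hab)
  · left
    rw [add_comm] at hu hαβ
    rw [add_comm (a • x)]
    rw [add_comm a] at habc
    exact smul_add_smul_add_smul_mem_convexHull_insert hβ hαβ hu hr hb ha hc habc hab

lemma mem_of_smul_add_smul_eq_of_smul_add_smul_eq {C : Set F} (hC : Convex 𝕜 C) {x y p q w : F}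
    {α β a b c d : 𝕜} (hα : 0 ≤ α) (hβ : 0 ≤ β) (hαβ : α + β = 1) (hu : α • x + β • y ∈ C)
    (hp : p ∈ C) (ha : 0 < a) (hb : 0 ≤ b) (hab : a + b = 1) (hw : a • x + b • p = w)
    (hq : q ∈ C) (hc : 0 < c) (hd : 0 ≤ d) (hcd : c + d = 1) (hw' : c • y + d • q = w) :
    w ∈ C := by
  -- Combining the two expressions of `w` in the ratio `α / a : β / c` turns their `x` and `y` terms
  -- into a multiple of `α • x + β • y`.
  have hpos : 0 < α * c + β * a := by
    rcases hα.eq_or_lt with rfl | hα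
    · obtain rfl : β = 1 := by simpa using hαβ
      simpa
    · positivity
  have hscaled : (α * c + β * a) • w =
      (a * c) • (α • x + β • y) + (α * c * b) • p + (β * a * d) • q := by
    linear_combination (norm := module) -(α * c) • hw - (β * a) • hw'
  have hcomb : w = (a * c / (α * c + β * a)) • (α • x + β • y) +
      (α * c * b / (α * c + β * a)) • p + (β * a * d / (α * c + β * a)) • q := by
    rw [← inv_smul_smul₀ hpos.ne' w, hscaled]
    simp only [div_eq_inv_mul]
    module
  rw [hcomb]
  refine smul_add_smul_add_smul_mem_of_convex hC hu hp hq
    (by positivity) (by positivity) (by positivity) ?_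
  rw [← add_div, ← add_div, div_eq_one_iff_eq hpos.ne']
  linear_combination -(a * c) * hαβ + α * c * hab + β * a * hcd

lemma convexHull_insert_inter_convexHull_insert {x y : F} {S : Set F}
    (h : (segment 𝕜 x y ∩ convexHull 𝕜 S).Nonempty) :
    convexHull 𝕜 (insert x S) ∩ convexHull 𝕜 (insert y S) = convexHull 𝕜 S := by
  obtain ⟨_, ⟨α, β, hα, hβ, hαβ, rfl⟩, hu⟩ := h
  have hS : S.Nonempty := convexHull_nonempty_iff.1 ⟨_, hu⟩
  apply Set.Subset.antisymm _ (Set.subset_inter (convexHull_mono (Set.subset_insert x S))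
    (convexHull_mono (Set.subset_insert y S)))
  rintro w ⟨hwx, hwy⟩
  simp only [convexHull_insert hS, convexJoin_singleton_left, Set.mem_iUnion, exists_prop]
    at hwx hwy
  obtain ⟨p, hp, a, b, ha, hb, hab, hw⟩ := hwx
  obtain ⟨q, hq, c, d, hc, hd, hcd, hw'⟩ := hwy
  rcases ha.eq_or_lt with rfl | ha
  · obtain rfl : b = 1 := by simpa using hab
    simpa [← hw] using hp
  rcases hc.eq_or_lt with rfl | hc
  · obtain rfl : d = 1 := by simpa using hcd
    simpa [← hw'] using hq
  exact mem_of_smul_add_smul_eq_of_smul_add_smul_eq (convex_convexHull 𝕜 S) hα hβ hαβ hu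
    hp ha hb hab hw hq hc hd hcd hw'

lemma exists_mem_segment_mem_convexHull_insert {x y p : F} {A : Set F}
    (hp : p ∈ convexHull 𝕜 (insert x (insert y A))) :
    ∃ u ∈ segment 𝕜 x y, p ∈ convexHull 𝕜 (insert u A) := by
  rcases A.eq_empty_or_nonempty with rfl | hA
  · rw [insert_empty_eq, convexHull_pair] at hp
    exact ⟨p, hp, subset_convexHull 𝕜 _ (Set.mem_insert p ∅)⟩
  · have hxy : insert x (insert y A) = {x, y} ∪ A := by rw [Set.insert_union, Set.singleton_union]
    rw [hxy, convexHull_union (Set.insert_nonempty x {y}) hA, convexHull_pair] at hp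
    obtain ⟨u, hu, r, hr, hpr⟩ := mem_convexJoin.1 hp
    refine ⟨u, hu, ?_⟩
    rw [convexHull_insert hA]
    exact mem_convexJoin.2 ⟨u, rfl, r, hr, hpr⟩

lemma exists_convexHull_inter_convexHull_insert_zero_nonempty {V : Set F}
    (hV : ¬ LinearIndepOn 𝕜 id V) :
    ∃ A ⊆ V, (convexHull 𝕜 A ∩ convexHull 𝕜 (insert 0 (V \ A))).Nonempty := by
  by_cases h0 : 0 ∈ V
  · refine ⟨{0}, Set.singleton_subset_iff.2 h0, 0, ?_, ?_⟩
    · exact subset_convexHull 𝕜 _ rfl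
    · exact subset_convexHull 𝕜 _ (Set.mem_insert 0 _)
  have hdep : ¬ AffineIndependent 𝕜 ((↑) : (insert 0 V : Set F) → F) := by
    rw [affineIndependent_set_iff_linearIndependent_vsub 𝕜 (Set.mem_insert 0 V)]
    have himage : (· -ᵥ (0 : F)) '' (insert 0 V \ {0}) = V := by simp [h0]
    rwa [himage]
  have of_zero_notMem (J : Set (insert 0 V : Set F)) (hJ : ⟨0, Set.mem_insert 0 V⟩ ∉ J)
      (hne : (convexHull 𝕜 ((↑) '' J : Set F) ∩ convexHull 𝕜 ((↑) '' Jᶜ)).Nonempty) :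
      ∃ A ⊆ V, (convexHull 𝕜 A ∩ convexHull 𝕜 (insert 0 (V \ A))).Nonempty := by
    refine ⟨(↑) '' J, ?_, hne.mono (Set.inter_subset_inter_right _ (convexHull_mono ?_))⟩
    · rintro _ ⟨⟨v, rfl | hv⟩, hvJ, rfl⟩
      exacts [absurd hvJ hJ, hv]
    · rintro _ ⟨⟨v, hv⟩, hvJ, rfl⟩
      refine hv.imp_right fun hvV => ⟨hvV, ?_⟩
      rintro ⟨v', hv', h⟩
      obtain rfl : v' = ⟨v, hv⟩ := Subtype.ext h
      exact hvJ hv'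
  obtain ⟨I, hI⟩ := Convex.radon_partition hdep
  by_cases h : ⟨0, Set.mem_insert 0 V⟩ ∈ I
  · refine of_zero_notMem Iᶜ (not_not_intro h) ?_
    rwa [compl_compl, Set.inter_comm]
  · exact of_zero_notMem I h hI

namespace IsPolytopeValuation

variable {z : Set F → G}

lemma add_convexHull_insert_of_mem_segment [Add G] (hz : IsPolytopeValuation 𝕜 z) {x y u : F}
    {S : Set F} (hu : u ∈ segment 𝕜 x y) (hS : S.Finite) (h0 : 0 ∈ S) :
    z (convexHull 𝕜 (insert x (insert u S))) + z (convexHull 𝕜 (insert y (insert u S))) =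
      z (convexHull 𝕜 (insert x (insert y S))) + z (convexHull 𝕜 (insert u S)) := by
  have hmeet : (segment 𝕜 x y ∩ convexHull 𝕜 (insert u S)).Nonempty :=
    ⟨u, hu, subset_convexHull 𝕜 _ (Set.mem_insert u S)⟩
  have hunion : convexHull 𝕜 (insert x (insert u S)) ∪ convexHull 𝕜 (insert y (insert u S)) =
      convexHull 𝕜 (insert x (insert y S)) := by
    rw [convexHull_insert_union_convexHull_insert hmeet, Set.insert_comm y, Set.insert_comm x]
    exact convexHull_insert_eq_of_mem (segment_subset_convexHull (by simp) (by simp) hu)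
  have hinter := convexHull_insert_inter_convexHull_insert hmeet
  have hpoly {T : Set F} (hT : T.Finite) (h0T : 0 ∈ T) : IsConvexPolytope 𝕜 (convexHull 𝕜 T) :=
    isConvexPolytope_convexHull hT ⟨0, h0T⟩
  have hval := hz _ _ (hpoly (T := insert x (insert u S)) (by simpa) (by simp [h0]))
    (hpoly (T := insert y (insert u S)) (by simpa) (by simp [h0]))
    (by rw [hunion]; exact hpoly (by simpa) (by simp [h0]))
    (by rw [hinter]; exact hpoly (by simpa) (by simp [h0]))
    (subset_convexHull 𝕜 _ (by simp [h0])) (subset_convexHull 𝕜 _ (by simp [h0]))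
  rwa [hunion, hinter] at hval

variable [AddZeroClass G]

lemma eq_zero_of_convexHull_inter_convexHull_insert_zero_nonempty
    (hz : IsPolytopeValuation 𝕜 z) {K : Set F} (hK : Convex 𝕜 K) {N : ℕ}
    (hN : ∀ T : Finset F, ↑T ⊆ K → T.card < N → z (convexHull 𝕜 (insert 0 (T : Set F))) = 0)
    {x : F} {A B : Finset F} (hx : x ∈ K) (hA : ↑A ⊆ K) (hB : ↑B ⊆ K)
    (hcard : A.card + B.card < N)
    (hmeet : (convexHull 𝕜 (insert x (A : Set F)) ∩ convexHull 𝕜 (insert 0 (B : Set F))).Nonempty) :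
    z (convexHull 𝕜 (insert 0 (insert x (A ∪ B : Set F)))) = 0 := by
  classical
  induction A using Finset.induction_on generalizing x B with
  | empty =>
    have hxB : x ∈ convexHull 𝕜 (insert 0 (B : Set F)) := by simpa using hmeet
    rw [Finset.coe_empty, Set.empty_union, Set.insert_comm, convexHull_insert_eq_of_mem hxB]
    exact hN B hB (by simpa using hcard)
  | insert y A hyA ih =>
    obtain ⟨p, hpA, hpB⟩ := hmeet
    rw [Finset.coe_insert] at hA hpA
    obtain ⟨hy, hA⟩ := Set.insert_subset_iff.1 hA
    rw [Finset.card_insert_of_notMem hyA] at hcard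
    obtain ⟨u, hu, hpu⟩ := exists_mem_segment_mem_convexHull_insert hpA
    have huK : u ∈ K := hK.segment_subset hx hy hu
    have hpiece {v : F} (hv : v ∈ K) :
        z (convexHull 𝕜 (insert v (insert u (insert 0 (A ∪ B : Set F))))) = 0 := by
      have hvB : (insert 0 (B : Set F)) ⊆ insert 0 ↑(insert v B) := by
        grind
      have := ih (B := insert v B) huK hA (by grind)
        (by have := Finset.card_insert_le v B; lia) ⟨p, hpu, convexHull_mono hvB hpB⟩
      convert this using 3
      grind
    have hcommon : z (convexHull 𝕜 (insert u (insert 0 (A ∪ B : Set F)))) = 0 := by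
      have := hN (insert u (A ∪ B)) (by grind)
        (by have := Finset.card_insert_le u (A ∪ B); have := Finset.card_union_le A B; lia)
      rwa [Finset.coe_insert, Finset.coe_union, Set.insert_comm] at this
    have hstellar := hz.add_convexHull_insert_of_mem_segment hu (S := insert 0 (A ∪ B : Set F))
      (by simp) (Set.mem_insert 0 _)
    rw [hpiece hx, hpiece hy, hcommon, add_zero, add_zero] at hstellar
    rw [hstellar]
    congr 2
    grind

lemma eq_zero_of_forall_linearIndepOn (hz : IsPolytopeValuation 𝕜 z) {K : Set F} (hK : Convex 𝕜 K)
    (hindep : ∀ T : Finset F, ↑T ⊆ K → LinearIndepOn 𝕜 id (T : Set F) →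
      z (convexHull 𝕜 (insert 0 (T : Set F))) = 0) (V : Finset F) (hV : ↑V ⊆ K) :
    z (convexHull 𝕜 (insert 0 (V : Set F))) = 0 := by
  classical
  induction hN : V.card using Nat.strong_induction_on generalizing V with
  | _ N ih =>
  by_cases hVind : LinearIndepOn 𝕜 id (V : Set F)
  · exact hindep V hV hVind
  obtain ⟨A, hAV, hmeet⟩ := exists_convexHull_inter_convexHull_insert_zero_nonempty hVind
  lift A to Finset F using V.finite_toSet.subset hAV
  rw [← Finset.coe_sdiff] at hmeet
  obtain ⟨x, hxA⟩ : A.Nonempty := convexHull_nonempty_iff.1 hmeet.left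
  have hVeq : (V : Set F) = insert x ((A.erase x : Set F) ∪ (V \ A : Finset F)) := by
    rw [← Set.insert_union, ← Finset.coe_insert, Finset.insert_erase hxA, ← Finset.coe_union,
      Finset.union_sdiff_of_subset hAV]
  rw [hVeq]
  have hcard := Finset.card_sdiff_add_card_eq_card hAV
  have hcard' := Finset.card_erase_add_one hxA
  refine hz.eq_zero_of_convexHull_inter_convexHull_insert_zero_nonempty hK (N := N)
    (fun T hT hTN => ih T.card hTN T hT rfl) (by grind) (by grind) (by grind) (by lia) ?_
  rwa [← Finset.coe_insert, Finset.insert_erase hxA]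

end IsPolytopeValuation
end OrderedField

lemma exists_basis_castLE_eq {K V : Type*} [DivisionRing K] [AddCommGroup V] [Module K V]
    [FiniteDimensional K V] {n k : ℕ} (hn : finrank K V = n) (hk : k ≤ n) {v : Fin k → V}
    (hv : LinearIndependent K v) : ∃ b : Basis (Fin n) K V, ∀ i, b (Fin.castLE hk i) = v i := by
  let B := Basis.sumExtend hv
  have := Module.Finite.finite_basis B
  have : Finite (Basis.sumExtendIndex hv) := Finite.of_injective _ (Sum.inr_injective (α := Fin k))
  have := Fintype.ofFinite (Basis.sumExtendIndex hv)
  have hcard : k + Fintype.card (Basis.sumExtendIndex hv) = n := by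
    rw [← hn, finrank_eq_card_basis B, Fintype.card_sum, Fintype.card_fin]
  let e : Fin k ⊕ Basis.sumExtendIndex hv ≃ Fin n :=
    ((Equiv.refl _).sumCongr (Fintype.equivFin _)).trans (finSumFinEquiv.trans (finCongr hcard))
  refine ⟨B.reindex e, fun i => ?_⟩
  have he : e.symm (Fin.castLE hk i) = Sum.inl i := by
    rw [Equiv.symm_apply_eq]
    rfl
  rw [Basis.reindex_apply, he]
  simp [B, Basis.sumExtend]
  rfl

lemma exists_specialLinearGroup_act_single_eq {n k : ℕ} (hk : k < n) {v : Fin k → E n}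
    (hv : LinearIndependent ℝ v) : ∃ φ : Matrix.SpecialLinearGroup (Fin n) ℝ,
      ∀ i, act φ.1 (EuclideanSpace.single (Fin.castLE hk.le i) 1) = v i := by
  obtain ⟨b, hb⟩ := exists_basis_castLE_eq finrank_euclideanSpace_fin hk.le hv
  let A : Matrix (Fin n) (Fin n) ℝ := (EuclideanSpace.basisFun (Fin n) ℝ).toBasis.toMatrix b
  let q : Fin n := ⟨k, hk⟩
  have hA : A.det ≠ 0 := by
    have := (EuclideanSpace.basisFun (Fin n) ℝ).toBasis.invertibleToMatrix b
    exact (Matrix.isUnit_det_of_invertible A).ne_zero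
  have hdet : (A.updateCol q (A.det⁻¹ • A.col q)).det = 1 := by
    rw [Matrix.det_updateCol_smul]
    have : A.updateCol q (A.col q) = A := A.updateCol_eq_self q
    rw [this, inv_mul_cancel₀ hA]
  refine ⟨⟨_, hdet⟩, fun i => ?_⟩
  have hiq : Fin.castLE hk.le i ≠ q := Fin.ne_of_lt i.2
  ext j
  simp [act, Matrix.toLpLin_apply, Matrix.updateCol_ne hiq, A, Basis.toMatrix_apply, hb]

lemma Tk_eq_convexHull_range {n k : ℕ} (hk : k ≤ n) : Tk n k = convexHull ℝ
    (insert 0 (Set.range fun i : Fin k => EuclideanSpace.single (Fin.castLE hk i) (1 : ℝ))) := by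
  rw [Tk, Set.singleton_union, ← Fin.range_castLE hk, ← Set.range_comp]
  rfl

lemma exists_specialLinearGroup_act_image_Tk_eq {n : ℕ} {T : Finset (E n)} (hT : T.card < n)
    (hindep : LinearIndepOn ℝ id (T : Set (E n))) :
    ∃ φ : Matrix.SpecialLinearGroup (Fin n) ℝ,
      act φ.1 '' Tk n T.card = convexHull ℝ (insert 0 (T : Set (E n))) := by
  let v : Fin T.card → E n := fun i => T.equivFin.symm i
  have hv : LinearIndependent ℝ v := hindep.comp _ T.equivFin.symm.injective
  have hrange : Set.range v = T := by
    rw [Set.range_comp' Subtype.val, T.equivFin.symm.range_eq_univ, Set.image_univ,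
      Subtype.range_coe]
  obtain ⟨φ, hφ⟩ := exists_specialLinearGroup_act_single_eq hT hv
  refine ⟨φ, ?_⟩
  rw [Tk_eq_convexHull_range hT.le, LinearMap.image_convexHull, Set.image_insert_eq, map_zero,
    ← Set.range_comp, ← hrange]
  exact congrArg (fun f => convexHull ℝ (insert 0 (Set.range f))) (funext hφ)

lemma polyDim_eq_finrank_span {n : ℕ} {P : Set (E n)} (h0 : 0 ∈ P) :
    polyDim P = finrank ℝ (Submodule.span ℝ P) := by
  have himage : (· -ᵥ (0 : E n)) '' P = P := by simp
  rw [polyDim, direction_affineSpan, vectorSpan_eq_span_vsub_set_right ℝ h0, himage]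

lemma card_le_polyDim_of_linearIndepOn {n : ℕ} {P : Set (E n)} (h0 : 0 ∈ P) {T : Finset (E n)}
    (hTP : ↑T ⊆ P) (hT : LinearIndepOn ℝ id (T : Set (E n))) : T.card ≤ polyDim P := by
  rw [polyDim_eq_finrank_span h0, ← finrank_span_finset_eq_card hT]
  exact Submodule.finrank_mono (Submodule.span_mono hTP)

lemma isPolytope_Tk (n k : ℕ) : IsPolytope (Tk n k) :=
  isConvexPolytope_convexHull (Set.toFinite _) ⟨0, Or.inl rfl⟩

lemma zero_mem_Tk (n k : ℕ) : 0 ∈ Tk n k :=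
  subset_convexHull ℝ _ (Or.inl rfl)

theorem vanishing_on_simplices_implies_simple_general {n : ℕ} {G : Type*} [AddZeroClass G]
    {Z : Set (E n) → G} (hZ : IsPolytopeValuation ℝ Z)
    (hT : ∀ (φ : Matrix.SpecialLinearGroup (Fin n) ℝ) (k : ℕ), k < n → Z (act φ.1 '' Tk n k) = 0)
    {P : Set (E n)} (hP : IsPolytope P) (h0 : 0 ∈ P) (hdim : polyDim P < n) : Z P = 0 := by
  obtain ⟨S, -, rfl⟩ := hP
  rw [← convexHull_insert_eq_of_mem h0]
  refine hZ.eq_zero_of_forall_linearIndepOn (convex_convexHull ℝ (S : Set (E n)))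
    (fun T hTP hTind => ?_) S (subset_convexHull ℝ _)
  have hcard : T.card < n := (card_le_polyDim_of_linearIndepOn h0 hTP hTind).trans_lt hdim
  obtain ⟨φ, hφ⟩ := exists_specialLinearGroup_act_image_Tk_eq hcard hTind
  rw [← hφ, hT φ T.card hcard]

/-- an SL(n) contravariant valuation on polytopes containing the origin,
vanishing on all `T^k`, `k ≤ n-1`, vanishes on all lower-dimensional such polytopes. -/
theorem vanishing_on_simplices_implies_simple {n : ℕ} (hn : 2 ≤ n) (Z : Set (E n) → E n)
    (hval : ∀ P Q : Set (E n), IsPolytope P → IsPolytope Q →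
      IsPolytope (P ∪ Q) → IsPolytope (P ∩ Q) → (0 : E n) ∈ P → (0 : E n) ∈ Q →
      Z P + Z Q = Z (P ∪ Q) + Z (P ∩ Q))
    (hcontra : ∀ (φ : Matrix.SpecialLinearGroup (Fin n) ℝ) (P : Set (E n)),
      IsPolytope P → (0 : E n) ∈ P →
      Z (act (φ : Matrix (Fin n) (Fin n) ℝ) '' P)
        = act (invT (φ : Matrix (Fin n) (Fin n) ℝ)) (Z P))
    (hT : ∀ k : ℕ, k ≤ n - 1 → Z (Tk n k) = 0) :
    ∀ P : Set (E n), IsPolytope P → (0 : E n) ∈ P → polyDim P ≤ n - 1 → Z P = 0 :=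
  fun _ hP h0 hdim => vanishing_on_simplices_implies_simple_general hval
    (fun φ k hk => by
      rw [hcontra φ _ (isPolytope_Tk n k) (zero_mem_Tk n k), hT k (by lia), map_zero])
    hP h0 (by lia)
end
end
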